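/- Interaction/localization estimates for solitons: let m, n ∈ {1,2}. There exists C > 0 such that for all sufficiently large t and all j ≠ k in {1,…,N}: (i) ∫_ℝ (|R_k^{(m)}(t)| + |∂ₓR_k^{(m)}(t)|) φ_j(x,t) dx ≤ C e^{−4 ω⋆^{3/2} t}; (ii) ∫_ℝ (|R_k^{(m)}(t)| + |∂ₓR_k^{(m)}(t)|) (1 − φ_k(x,t)) dx ≤ C e^{−4 ω⋆^{3/2} t}; (iii) ∫_ℝ (|R_k^{(m)}(t)| + |∂ₓR_k^{(m)}(t)|)(|R_j^{(n)}(t)| + |∂ₓR_j^{(n)}(t)|) dx ≤ C e^{−4 ω⋆^{3/2} t}. -/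

import Mathlib

noncomputable section
open MeasureTheory Real Filter

/-- Hyperbolic secant. -/
def sech (x : ℝ) : ℝ := 1 / Real.cosh x

/-- The ground state profile `Φ_ω(x) = (1-ω²)^{1/(2p)} ((p+1) sech²(p√(1-ω²)x))^{1/(2p)}`. -/
def groundState (p ω : ℝ) (x : ℝ) : ℝ :=
  (1 - ω ^ 2) ^ (1 / (2 * p)) *
    ((p + 1) * sech (p * Real.sqrt (1 - ω ^ 2) * x) ^ 2) ^ (1 / (2 * p))

/-- Component `m` of the soliton `R_j`. -/
def soliton (p ω c : ℝ) (m : Fin 2) (t x : ℝ) : ℝ :=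
  if m = 0 then groundState p ω (x - ω * t - c)
  else -ω * groundState p ω (x - ω * t - c)

/-- `ω⋆ = (1/256) min{1-ω_j², |ω_j-ω_k| : j ≠ k}`. -/
def omegaStar {N : ℕ} (ω : Fin N → ℝ) : ℝ :=
  (1 / 256) * sInf ({a | ∃ j, a = 1 - ω j ^ 2} ∪ {a | ∃ j k, j ≠ k ∧ a = |ω j - ω k|})

/-- The cutoff `ψ_j(x,t)`: `ψ_1 ≡ 1` and `ψ_j(x,t) = ψ((x - m_j t)/√t)` with
`m_j = (ω_{j-1} + ω_j)/2` for `j ≥ 2` (here indices start at `0`). -/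
def psiCut {N : ℕ} (ψ : ℝ → ℝ) (ω : Fin N → ℝ) (i : Fin N) (t x : ℝ) : ℝ :=
  if i.val = 0 then 1
  else ψ ((x - ((ω ⟨i.val - 1, Nat.lt_of_le_of_lt (Nat.sub_le _ _) i.isLt⟩ + ω i) / 2) * t) /
    Real.sqrt t)

/-- The partition functions `φ_j = ψ_j - ψ_{j+1}` (`j < N`), `φ_N = ψ_N`. -/
def phiCut {N : ℕ} (ψ : ℝ → ℝ) (ω : Fin N → ℝ) (i : Fin N) (t x : ℝ) : ℝ :=
  if h : i.val + 1 < N then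
    psiCut ψ ω i t x - psiCut ψ ω ⟨i.val + 1, h⟩ t x
  else psiCut ψ ω i t x

lemma sie_f_hasDeriv (p b y : ℝ) :
    HasDerivAt (fun y : ℝ => (p + 1) * sech (b * y) ^ 2)
      (-2 * b * (Real.sinh (b * y) / Real.cosh (b * y)) * ((p + 1) * sech (b * y) ^ 2)) y := by
  have hc : Real.cosh (b * y) ≠ 0 := (Real.cosh_pos _).ne'
  have h0 : HasDerivAt (fun y : ℝ => b * y) b y := by
    simpa using (hasDerivAt_id y).const_mul b
  have h1 : HasDerivAt (fun y : ℝ => Real.cosh (b * y)) (Real.sinh (b * y) * b) y :=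
    (Real.hasDerivAt_cosh (b * y)).comp y h0
  have h2 := ((h1.inv hc).pow 2).const_mul (p + 1)
  have h3 : (fun y : ℝ => (p + 1) * sech (b * y) ^ 2) =
      fun y : ℝ => (p + 1) * ((fun y : ℝ => Real.cosh (b * y))⁻¹ ^ 2) y := by
    funext z; simp [sech]
  rw [h3]
  refine h2.congr_deriv ?_
  simp only [sech, Pi.inv_apply]
  field_simp
  simp
  field_simp

lemma sie_gs_deriv (p ω : ℝ) (hp : 0 < p) (y : ℝ) :
    HasDerivAt (groundState p ω)
      (-Real.sqrt (1 - ω ^ 2) * (Real.sinh (p * Real.sqrt (1 - ω ^ 2) * y) /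
        Real.cosh (p * Real.sqrt (1 - ω ^ 2) * y)) * groundState p ω y) y := by
  have hf := sie_f_hasDeriv p (p * Real.sqrt (1 - ω ^ 2)) y
  have hpos : 0 < (p + 1) * sech (p * Real.sqrt (1 - ω ^ 2) * y) ^ 2 := by
    have := Real.cosh_pos (p * Real.sqrt (1 - ω ^ 2) * y)
    unfold sech; positivity
  have h := (hf.rpow_const (p := 1 / (2 * p)) (Or.inl hpos.ne')).const_mul
    ((1 - ω ^ 2) ^ (1 / (2 * p)))
  refine HasDerivAt.congr_deriv (f := groundState p ω) h ?_
  unfold groundState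
  rw [Real.rpow_sub_one hpos.ne']
  generalize ((p + 1) * sech (p * Real.sqrt (1 - ω ^ 2) * y) ^ 2) ^ (1 / (2 * p)) = F at *
  generalize (p + 1) * sech (p * Real.sqrt (1 - ω ^ 2) * y) ^ 2 = G at *
  have := hpos.ne'
  have hc := (Real.cosh_pos (p * Real.sqrt (1 - ω ^ 2) * y)).ne'
  field_simp

lemma sie_gs_bound (p ω : ℝ) (hp : 0 < p) (hω : 0 ≤ 1 - ω ^ 2) (y : ℝ) :
    |groundState p ω y| ≤ (1 - ω ^ 2) ^ (1 / (2 * p)) * (4 * (p + 1)) ^ (1 / (2 * p)) *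
      Real.exp (-Real.sqrt (1 - ω ^ 2) * |y|) := by
  set a := Real.sqrt (1 - ω ^ 2) with ha
  have ha0 : 0 ≤ a := Real.sqrt_nonneg _
  have hs : sech (p * a * y) ≤ 2 * Real.exp (-(p * a * |y|)) := by
    unfold sech
    have h1 : Real.exp (p * a * |y|) ≤ 2 * Real.cosh (p * a * y) := by
      rw [← Real.cosh_abs, abs_mul, abs_of_nonneg (by positivity : 0 ≤ p * a), Real.cosh_eq]
      have := Real.exp_pos (-(p * a * |y|))
      linarith
    rw [div_le_iff₀ (Real.cosh_pos _)]
    have h2 : Real.exp (-(p * a * |y|)) * Real.exp (p * a * |y|) = 1 := by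
      rw [← Real.exp_add]; simp
    have h3 := mul_le_mul_of_nonneg_left h1 (Real.exp_pos (-(p * a * |y|))).le
    linarith
  have hs0 : 0 ≤ sech (p * a * y) := by
    unfold sech; have := Real.cosh_pos (p * a * y); positivity
  have hsq : (p + 1) * sech (p * a * y) ^ 2 ≤ (4 * (p + 1)) * Real.exp (-(2 * p * a * |y|)) := by
    have h4 := pow_le_pow_left₀ hs0 hs 2
    have h5 : (2 * Real.exp (-(p * a * |y|))) ^ 2 = 4 * Real.exp (-(2 * p * a * |y|)) := by
      rw [mul_pow, ← Real.exp_nat_mul]; push_cast; ring_nf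
    rw [h5] at h4
    nlinarith
  have hr := Real.rpow_le_rpow (by positivity) hsq (by positivity : 0 ≤ 1 / (2 * p))
  rw [Real.mul_rpow (by positivity) (Real.exp_pos _).le, ← Real.exp_mul] at hr
  have he : -(2 * p * a * |y|) * (1 / (2 * p)) = -a * |y| := by field_simp
  rw [he] at hr
  have hA : 0 ≤ (1 - ω ^ 2) ^ (1 / (2 * p)) := Real.rpow_nonneg hω _
  unfold groundState
  rw [← ha, abs_of_nonneg (mul_nonneg hA (Real.rpow_nonneg (by positivity) _)),
    mul_assoc ((1 - ω ^ 2) ^ (1 / (2 * p)))]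
  exact mul_le_mul_of_nonneg_left hr hA

/-- Pointwise bound of a soliton and its derivative. -/
lemma sie_soliton_bound (p ω c s : ℝ) (hp : 0 < p) (hω : |ω| < 1) (hs : 0 ≤ s)
    (hsω : s ≤ Real.sqrt (1 - ω ^ 2)) :
    ∃ A : ℝ, 0 ≤ A ∧ ∀ (m : Fin 2) (t x : ℝ),
      |soliton p ω c m t x| + |deriv (soliton p ω c m t) x| ≤
        A * Real.exp (-s * |x - ω * t|) := by
  have hω2 : ω ^ 2 < 1 := by rw [sq_lt_one_iff_abs_lt_one]; exact hω
  set B := (1 - ω ^ 2) ^ (1 / (2 * p)) * (4 * (p + 1)) ^ (1 / (2 * p)) with hB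
  have hB0 : 0 ≤ B := mul_nonneg (Real.rpow_nonneg (by linarith) _) (by positivity)
  refine ⟨2 * B * Real.exp (s * |c|), by positivity, fun m t x => ?_⟩
  set y := x - ω * t - c with hy
  have hg := sie_gs_bound p ω hp (by linarith) y
  rw [← hB] at hg
  have hlin : HasDerivAt (fun x : ℝ => x - ω * t - c) 1 x :=
    ((hasDerivAt_id x).sub_const (ω * t)).sub_const c
  have hd0 := sie_gs_deriv p ω hp y
  set D := -Real.sqrt (1 - ω ^ 2) * (Real.sinh (p * Real.sqrt (1 - ω ^ 2) * y) /
        Real.cosh (p * Real.sqrt (1 - ω ^ 2) * y)) * groundState p ω y with hD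
  have hd : HasDerivAt (fun x : ℝ => groundState p ω (x - ω * t - c)) D x := by
    have := HasDerivAt.comp x hd0 hlin
    rw [mul_one] at this
    exact this
  have hDle : |D| ≤ |groundState p ω y| := by
    rw [hD, abs_mul, abs_mul, abs_neg, abs_of_nonneg (Real.sqrt_nonneg _)]
    have h1 : Real.sqrt (1 - ω ^ 2) ≤ 1 := by
      rw [Real.sqrt_le_left (by norm_num)]; nlinarith [sq_nonneg ω]
    have h2 : |Real.sinh (p * Real.sqrt (1 - ω ^ 2) * y) /
        Real.cosh (p * Real.sqrt (1 - ω ^ 2) * y)| ≤ 1 := by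
      rw [abs_div, Real.abs_sinh, abs_of_pos (Real.cosh_pos _), ← Real.cosh_abs (p * _ * y)]
      rw [div_le_one (Real.cosh_pos _)]
      exact (Real.sinh_lt_cosh _).le
    have h3 := mul_le_one₀ h1 (abs_nonneg _) h2
    calc _ ≤ 1 * |groundState p ω y| := mul_le_mul_of_nonneg_right h3 (abs_nonneg _)
      _ = _ := one_mul _
  have hexp : Real.exp (-Real.sqrt (1 - ω ^ 2) * |y|) ≤
      Real.exp (s * |c|) * Real.exp (-s * |x - ω * t|) := by
    rw [← Real.exp_add, Real.exp_le_exp]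
    have h1 : |x - ω * t| ≤ |y| + |c| := by
      have := abs_add_le y c
      rwa [hy, sub_add_cancel] at this
    have h2 := mul_le_mul_of_nonneg_left h1 hs
    have h3 := mul_le_mul_of_nonneg_right hsω (abs_nonneg y)
    linarith
  have hfin : |groundState p ω y| ≤ B * (Real.exp (s * |c|) * Real.exp (-s * |x - ω * t|)) :=
    hg.trans (mul_le_mul_of_nonneg_left hexp hB0)
  by_cases hm : m = 0
  · have e : soliton p ω c m t = fun x => groundState p ω (x - ω * t - c) := by
      funext z; simp [soliton, hm]
    rw [e, hd.deriv]
    show |groundState p ω y| + |D| ≤ _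
    linarith
  · have e : soliton p ω c m t = fun x => -ω * groundState p ω (x - ω * t - c) := by
      funext z; simp [soliton, hm]
    rw [e, (hd.const_mul (-ω)).deriv]
    show |-ω * groundState p ω y| + |-ω * D| ≤ _
    rw [abs_mul, abs_mul, abs_neg]
    have h1 := mul_le_mul_of_nonneg_right hω.le (abs_nonneg (groundState p ω y))
    have h2 := mul_le_mul_of_nonneg_right hω.le (abs_nonneg D)
    linarith

lemma sie_integrable (r : ℝ) (hr : 0 < r) : Integrable (fun x : ℝ => Real.exp (-r * |x|)) := by
  rw [← integrableOn_univ, ← Set.Iic_union_Ioi (a := (0 : ℝ))]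
  refine IntegrableOn.union ?_ ?_
  · refine (integrableOn_exp_mul_Iic hr 0).congr_fun (fun x hx => ?_) measurableSet_Iic
    simp only [abs_of_nonpos (Set.mem_Iic.1 hx)]
    ring_nf
  · refine (integrableOn_exp_mul_Ioi (neg_lt_zero.2 hr) 0).congr_fun (fun x hx => ?_)
      measurableSet_Ioi
    simp only [abs_of_pos (Set.mem_Ioi.1 hx)]

/-- Bounds for the minimum `S`. -/
lemma sie_min {N : ℕ} (hN : 2 ≤ N) (ω : Fin N → ℝ) (hω : ∀ j, |ω j| < 1)
    (hord : ∀ j k : Fin N, j < k → ω j < ω k) :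
    ∃ S : ℝ, 0 < S ∧ omegaStar ω = S / 256 ∧ (∀ j, S ≤ 1 - ω j ^ 2) ∧
      ∀ j k, j < k → ω j + S ≤ ω k := by
  set A : Set ℝ := {a | ∃ j, a = 1 - ω j ^ 2} ∪ {a | ∃ j k, j ≠ k ∧ a = |ω j - ω k|} with hA
  have hfin : A.Finite := by
    refine Set.Finite.union ?_ ?_
    · refine (Set.finite_range (fun j => 1 - ω j ^ 2)).subset ?_
      rintro a ⟨j, rfl⟩; exact ⟨j, rfl⟩
    · refine (Set.finite_range (fun q : Fin N × Fin N => |ω q.1 - ω q.2|)).subset ?_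
      rintro a ⟨j, k, _, rfl⟩; exact ⟨(j, k), rfl⟩
  have hne : A.Nonempty := ⟨_, Or.inl ⟨⟨0, by omega⟩, rfl⟩⟩
  have hmem := hne.csInf_mem hfin
  have hle : ∀ a ∈ A, sInf A ≤ a := fun a ha => csInf_le hfin.bddBelow ha
  refine ⟨sInf A, ?_, ?_, fun j => hle _ (Or.inl ⟨j, rfl⟩), fun j k hjk => ?_⟩
  · rcases hmem with ⟨j, hj⟩ | ⟨j, k, hjk, hj⟩
    · rw [hj]
      have := (sq_lt_one_iff_abs_lt_one (ω j)).2 (hω j)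
      linarith
    · rw [hj, abs_pos, sub_ne_zero]
      rcases lt_or_gt_of_ne hjk with h | h
      · exact (hord _ _ h).ne
      · exact (hord _ _ h).ne'
  · unfold omegaStar; rw [← hA]; ring
  · have h1 := hle _ (Or.inr ⟨k, j, hjk.ne', rfl⟩)
    rw [abs_of_pos (sub_pos.2 (hord _ _ hjk))] at h1
    linarith

lemma sie_psi_abs (ψ : ℝ → ℝ) 
    (hψ0 : ∀ s : ℝ, s < -1 → ψ s = 0)
    (hψmid : ∀ s ∈ Set.Icc (-1 : ℝ) 1, ψ s ∈ Set.Icc (0 : ℝ) 1)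
    (hψ1 : ∀ s : ℝ, 1 < s → ψ s = 1) {N : ℕ} (ω : Fin N → ℝ) (i : Fin N) (t x : ℝ) :
    0 ≤ psiCut ψ ω i t x ∧ psiCut ψ ω i t x ≤ 1 := by
  have h : ∀ s, 0 ≤ ψ s ∧ ψ s ≤ 1 := by
    intro s
    by_cases h1 : s < -1
    · rw [hψ0 s h1]; norm_num
    by_cases h2 : 1 < s
    · rw [hψ1 s h2]; norm_num
    exact hψmid s ⟨not_lt.1 h1, not_lt.1 h2⟩
  unfold psiCut
  split_ifs
  · norm_num
  · exact h _

lemma sie_phi_abs (ψ : ℝ → ℝ) 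
    (hψ0 : ∀ s : ℝ, s < -1 → ψ s = 0)
    (hψmid : ∀ s ∈ Set.Icc (-1 : ℝ) 1, ψ s ∈ Set.Icc (0 : ℝ) 1)
    (hψ1 : ∀ s : ℝ, 1 < s → ψ s = 1) {N : ℕ} (ω : Fin N → ℝ) (i : Fin N) (t x : ℝ) :
    |phiCut ψ ω i t x| ≤ 1 := by
  have h := fun i => sie_psi_abs ψ hψ0 hψmid hψ1 ω i t x
  unfold phiCut
  split_ifs with h1
  · have := h i; have := h ⟨i.val + 1, h1⟩
    rw [abs_le]; constructor <;> linarith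
  · have := h i
    rw [abs_le]; constructor <;> linarith

lemma sie_psi_eq (ψ : ℝ → ℝ) 
    (hψ0 : ∀ s : ℝ, s < -1 → ψ s = 0)
    (hψ1 : ∀ s : ℝ, 1 < s → ψ s = 1) {N : ℕ} (ω : Fin N → ℝ) (S : ℝ) (hS : 0 < S)
    (hgap : ∀ j k, j < k → ω j + S ≤ ω k) (i k : Fin N) (t x : ℝ) (ht : 0 < t)
    (hts : Real.sqrt t < S * t / 4) (hx : |x - ω k * t| < S * t / 4) :
    psiCut ψ ω i t x = if i ≤ k then 1 else 0 := by
  have hmono : ∀ a b : Fin N, a ≤ b → ω a ≤ ω b := by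
    intro a b hab
    rcases hab.eq_or_lt with h | h
    · rw [h]
    · have := hgap _ _ h; linarith
  have hq : 0 < Real.sqrt t := Real.sqrt_pos.2 ht
  rw [abs_lt] at hx
  unfold psiCut
  by_cases h0 : i.val = 0
  · rw [if_pos h0, if_pos]
    rw [Fin.le_def]; omega
  rw [if_neg h0]
  set i' : Fin N := ⟨i.val - 1, Nat.lt_of_le_of_lt (Nat.sub_le _ _) i.isLt⟩ with hi'
  split_ifs with hik
  · apply hψ1
    rw [lt_div_iff₀ hq]
    have h1 : ω i' + S ≤ ω k := by
      apply hgap; rw [Fin.lt_def]; rw [Fin.le_def] at hik; simp only [hi']; omega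
    have h2 := hmono _ _ hik
    have h3 : (ω i' + ω i) / 2 * t ≤ (ω k - S / 2) * t :=
      mul_le_mul_of_nonneg_right (by linarith) ht.le
    linarith
  · apply hψ0
    rw [div_lt_iff₀ hq]
    have h1 : ω k + S ≤ ω i := hgap _ _ (not_le.1 hik)
    have h2 : ω k ≤ ω i' := by
      apply hmono; rw [Fin.le_def]; rw [Fin.le_def] at hik; simp only [hi']; omega
    have h3 : (ω k + S / 2) * t ≤ (ω i' + ω i) / 2 * t :=
      mul_le_mul_of_nonneg_right (by linarith) ht.le
    linarith

lemma sie_phi_eq (ψ : ℝ → ℝ) 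
    (hψ0 : ∀ s : ℝ, s < -1 → ψ s = 0)
    (hψ1 : ∀ s : ℝ, 1 < s → ψ s = 1) {N : ℕ} (ω : Fin N → ℝ) (S : ℝ) (hS : 0 < S)
    (hgap : ∀ j k, j < k → ω j + S ≤ ω k) (i k : Fin N) (t x : ℝ) (ht : 0 < t)
    (hts : Real.sqrt t < S * t / 4) (hx : |x - ω k * t| < S * t / 4) :
    phiCut ψ ω i t x = if i = k then 1 else 0 := by
  have h := fun i => sie_psi_eq ψ hψ0 hψ1 ω S hS hgap i k t x ht hts hx
  have hk := k.isLt
  have hi := i.isLt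
  unfold phiCut
  simp only [h, Fin.le_def, Fin.ext_iff]
  split_ifs <;> first | omega | norm_num

/-- Core integral estimate. -/
lemma sie_integral (f : ℝ → ℝ) (B s v E : ℝ) (hs : 0 < s)
    (hf : ∀ x, |f x| ≤ B * Real.exp (-s / 2 * |x - v|) * E) :
    ∫ x, f x ≤ B * (∫ x : ℝ, Real.exp (-(s / 2) * |x|)) * E := by
  have hint := (sie_integrable (s / 2) (by positivity)).comp_sub_right v
  have hint2 : Integrable (fun x : ℝ => B * Real.exp (-(s / 2) * |x - v|) * E) :=
    (hint.const_mul B).mul_const E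
  have h := norm_integral_le_of_norm_le (f := f) hint2
    (Filter.Eventually.of_forall fun x => by
      rw [Real.norm_eq_abs, ← neg_div]; exact hf x)
  refine (le_abs_self _).trans (h.trans_eq ?_)
  rw [integral_mul_const, integral_const_mul]
  rw [integral_sub_right_eq_self (fun x : ℝ => Real.exp (-(s / 2) * |x|)) v]

/-- interaction/localization estimates for the solitons. -/
theorem soliton_interaction_estimates
    (p : ℝ) (hp0 : 0 < p)
    (N : ℕ) (hN : 2 ≤ N)
    (ω : Fin N → ℝ) (hω : ∀ j, |ω j| < 1)
    (hord : ∀ j k : Fin N, j < k → ω j < ω k)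
    (c : Fin N → ℝ)
    (ψ : ℝ → ℝ) (hψsmooth : ContDiff ℝ (⊤ : ℕ∞) ψ)
    (hψ0 : ∀ s : ℝ, s < -1 → ψ s = 0)
    (hψmid : ∀ s ∈ Set.Icc (-1 : ℝ) 1, ψ s ∈ Set.Icc (0 : ℝ) 1)
    (hψ1 : ∀ s : ℝ, 1 < s → ψ s = 1) :
    ∃ C : ℝ, 0 < C ∧ ∃ T₁ : ℝ, ∀ t ≥ T₁, ∀ m n : Fin 2, ∀ j k : Fin N, j ≠ k →
      -- (i)
      ((∫ x : ℝ, (|soliton p (ω k) (c k) m t x| +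
          |deriv (soliton p (ω k) (c k) m t) x|) * phiCut ψ ω j t x)
        ≤ C * Real.exp (-4 * omegaStar ω ^ ((3 : ℝ) / 2) * t)) ∧
      -- (ii)
      ((∫ x : ℝ, (|soliton p (ω k) (c k) m t x| +
          |deriv (soliton p (ω k) (c k) m t) x|) * (1 - phiCut ψ ω k t x))
        ≤ C * Real.exp (-4 * omegaStar ω ^ ((3 : ℝ) / 2) * t)) ∧
      -- (iii)
      ((∫ x : ℝ, (|soliton p (ω k) (c k) m t x| +
          |deriv (soliton p (ω k) (c k) m t) x|) *
          (|soliton p (ω j) (c j) n t x| + |deriv (soliton p (ω j) (c j) n t) x|))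
        ≤ C * Real.exp (-4 * omegaStar ω ^ ((3 : ℝ) / 2) * t)) := by
  obtain ⟨S, hS, hstar, hS1, hgap⟩ := sie_min hN ω hω hord
  set s := Real.sqrt S with hs
  have hs0 : 0 < s := Real.sqrt_pos.2 hS
  have hbd := fun j => sie_soliton_bound p (ω j) (c j) s hp0 (hω j) hs0.le
    (Real.sqrt_le_sqrt (hS1 j))
  choose A0 hA0 hA using hbd
  set A := 1 + ∑ j, A0 j with hAdef
  have hApos : 1 ≤ A := by
    have := Finset.sum_nonneg (fun j (_ : j ∈ Finset.univ) => hA0 j)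
    linarith
  have hAj : ∀ j, A0 j ≤ A := fun j => by
    have := Finset.single_le_sum (fun j _ => hA0 j) (Finset.mem_univ j)
    linarith
  have hsol : ∀ (j : Fin N) (m : Fin 2) (t x : ℝ), |soliton p (ω j) (c j) m t x| +
      |deriv (soliton p (ω j) (c j) m t) x| ≤ A * Real.exp (-s * |x - ω j * t|) :=
    fun j m t x => (hA j m t x).trans
      (mul_le_mul_of_nonneg_right (hAj j) (Real.exp_pos _).le)
  set K := ∫ x : ℝ, Real.exp (-(s / 2) * |x|) with hK
  have hK0 : 0 ≤ K := integral_nonneg fun x => (Real.exp_pos _).le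
  have hrate : 4 * omegaStar ω ^ ((3 : ℝ) / 2) ≤ s * S / 8 := by
    rw [hstar]
    have h1 : (S / 256) ^ ((3 : ℝ) / 2) = S / 256 * Real.sqrt (S / 256) := by
      rw [Real.sqrt_eq_rpow, show (3 : ℝ) / 2 = 1 + 1 / 2 by norm_num,
        Real.rpow_add (by positivity), Real.rpow_one]
    have h2 : Real.sqrt (S / 256) ≤ s := Real.sqrt_le_sqrt (by linarith)
    rw [h1]
    have h3 := mul_le_mul_of_nonneg_left h2 (by positivity : 0 ≤ S / 256)
    have h4 : 0 < s * S := by positivity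
    linarith
  refine ⟨2 * A ^ 2 * (K + 1), by positivity, 16 / S ^ 2 + 1, ?_⟩
  intro t ht m n j k hjk
  have ht0 : 0 < t := lt_of_lt_of_le (by positivity) ht
  have hts : Real.sqrt t < S * t / 4 := by
    rw [Real.sqrt_lt' (by positivity)]
    have h1 : 16 / S ^ 2 < t := by linarith
    rw [div_lt_iff₀ (by positivity)] at h1
    nlinarith
  set E := Real.exp (-4 * omegaStar ω ^ ((3 : ℝ) / 2) * t) with hE
  have hE0 : 0 < E := Real.exp_pos _
  -- splitting of the exponential
  have hsplit : ∀ r q : ℝ, S * t / 4 ≤ r + q → 0 ≤ q → 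
      Real.exp (-s * r) * Real.exp (-s * q) ≤ Real.exp (-s / 2 * r) * E := by
    intro r q hr hq
    rw [hE, ← Real.exp_add, ← Real.exp_add, Real.exp_le_exp]
    have h1 := mul_le_mul_of_nonneg_right hrate ht0.le
    have h2 := mul_le_mul_of_nonneg_left hr hs0.le
    have h3 := mul_nonneg hs0.le hq
    linarith
  have hnn : ∀ (j : Fin N) (m : Fin 2) (x : ℝ), 0 ≤ |soliton p (ω j) (c j) m t x| +
      |deriv (soliton p (ω j) (c j) m t) x| := fun j m x => by positivity
  have hloc : ∀ g : ℝ → ℝ, (∀ x, |g x| ≤ 2) → (∀ x, |x - ω k * t| < S * t / 4 → g x = 0) →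
      ∫ x : ℝ, (|soliton p (ω k) (c k) m t x| +
          |deriv (soliton p (ω k) (c k) m t) x|) * g x ≤ 2 * A ^ 2 * (K + 1) * E := by
    intro g hg2 hg0
    have h := sie_integral (fun x => (|soliton p (ω k) (c k) m t x| +
          |deriv (soliton p (ω k) (c k) m t) x|) * g x) (2 * A) s (ω k * t) E hs0 ?_
    · refine h.trans (mul_le_mul_of_nonneg_right ?_ hE0.le)
      have h1 : 2 * A ≤ 2 * A ^ 2 := by nlinarith
      exact mul_le_mul h1 (by linarith) hK0 (by positivity)
    · intro x
      by_cases hx : |x - ω k * t| < S * t / 4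
      · simp only [hg0 x hx, mul_zero, abs_zero]; positivity
      · have h1 := hsplit (|x - ω k * t|) 0 (by linarith) le_rfl
        rw [mul_zero, Real.exp_zero, mul_one] at h1
        rw [abs_mul, abs_of_nonneg (hnn k m x)]
        calc _ ≤ (A * Real.exp (-s * |x - ω k * t|)) * 2 :=
              mul_le_mul (hsol k m t x) (hg2 x) (abs_nonneg _) (by positivity)
          _ ≤ (A * (Real.exp (-s / 2 * |x - ω k * t|) * E)) * 2 := by gcongr
          _ = _ := by ring
  refine ⟨hloc _ ?_ ?_, hloc _ ?_ ?_, ?_⟩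
  · intro x
    exact (sie_phi_abs ψ hψ0 hψmid hψ1 ω j t x).trans (by norm_num)
  · intro x hx
    rw [sie_phi_eq ψ hψ0 hψ1 ω S hS hgap j k t x ht0 hts hx, if_neg hjk]
  · intro x
    have := abs_le.1 (sie_phi_abs ψ hψ0 hψmid hψ1 ω k t x)
    rw [abs_le]; constructor <;> linarith
  · intro x hx
    rw [sie_phi_eq ψ hψ0 hψ1 ω S hS hgap k k t x ht0 hts hx, if_pos rfl, sub_self]
  · have h := sie_integral (fun x => (|soliton p (ω k) (c k) m t x| +
          |deriv (soliton p (ω k) (c k) m t) x|) *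
          (|soliton p (ω j) (c j) n t x| + |deriv (soliton p (ω j) (c j) n t) x|))
          (A ^ 2) s (ω k * t) E hs0 ?_
    · refine h.trans (mul_le_mul_of_nonneg_right ?_ hE0.le)
      exact mul_le_mul (by nlinarith) (by linarith) hK0 (by positivity)
    · intro x
      have hgap2 : S * t ≤ |x - ω k * t| + |x - ω j * t| := by
        have h1 : S ≤ |ω k - ω j| := by
          rcases lt_or_gt_of_ne hjk with h | h
          · have := hgap _ _ h
            exact le_trans (by linarith) (le_abs_self _)
          · have := hgap _ _ h
            exact le_trans (by linarith) (neg_le_abs _)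
        have h2 : |(ω k - ω j) * t| ≤ |x - ω k * t| + |x - ω j * t| := by
          have := abs_sub (x - ω j * t) (x - ω k * t)
          rw [show x - ω j * t - (x - ω k * t) = (ω k - ω j) * t by ring] at this
          linarith
        rw [abs_mul, abs_of_pos ht0] at h2
        exact (mul_le_mul_of_nonneg_right h1 ht0.le).trans h2
      have hSt : 0 < S * t := by positivity
      have h1 := hsplit (|x - ω k * t|) (|x - ω j * t|) (by linarith) (abs_nonneg _)
      rw [abs_of_nonneg (mul_nonneg (hnn k m x) (hnn j n x))]
      calc _ ≤ (A * Real.exp (-s * |x - ω k * t|)) * (A * Real.exp (-s * |x - ω j * t|)) :=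
              mul_le_mul (hsol k m t x) (hsol j n t x) (hnn j n x) (by positivity)
        _ = A ^ 2 * (Real.exp (-s * |x - ω k * t|) * Real.exp (-s * |x - ω j * t|)) := by ring
        _ ≤ A ^ 2 * (Real.exp (-s / 2 * |x - ω k * t|) * E) := by gcongr
        _ = _ := by ring
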